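/- Let ⟨N, E, f⟩ be a deterministic synchronized Petri net with P = Ps ⊎ Pz and T = Ts ⊎ Tz, such that every t ∈ Ts has exactly one input place ins(t) ∈ Ps and one output place outs(t) ∈ Ps with Pre(ins(t), t) = Post(outs(t), t) = 1 and Pre(p, t) = Post(p, t) = 0 for all other p ∈ Ps (the restriction to (Ps, Ts) is a state machine subnet), and such that every t ∈ Tz satisfies Pre(p, t) = Post(p, t) = 0 for all p ∈ Ps (condition i). Then for every marking M and every input event e ∈ E: Σ_{p∈Ps} step(M, e)(p) = Σ_{p∈Ps} M(p), i.e. the token count in the state machine subnet is invariant. -/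

import Mathlib

open scoped Classical BigOperators

/-- A synchronized Petri net `⟨N, E, f⟩`: `Pre`/`Post` incidence functions
and a labeling `f` of transitions by input events. -/
structure SyncPN (P T E : Type) where
  Pre : P → T → ℕ
  Post : P → T → ℕ
  f : T → E

/-- A transition `t` is enabled at marking `M` if `M(p) ≥ Pre(p,t)` for all `p`. -/
def enabled {P T E : Type} (N : SyncPN P T E) (M : P → ℕ) (t : T) : Prop :=
  ∀ p, N.Pre p t ≤ M p

/-- Occurrence of input event `e` at marking `M`: all enabled transitions labeled `e`
fire simultaneously: `step M e (p) = M(p) + Σ Post(p,t) − Σ Pre(p,t)`,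
the sums ranging over enabled transitions labeled `e`. -/
noncomputable def step {P T E : Type} [Fintype T] (N : SyncPN P T E) (M : P → ℕ)
    (e : E) : P → ℕ := fun p =>
  M p + (∑ t : T, if N.f t = e ∧ enabled N M t then N.Post p t else 0)
      - ∑ t : T, if N.f t = e ∧ enabled N M t then N.Pre p t else 0

/-- Extension of `step` to input words: `M →w stepWord N M w`. -/
noncomputable def stepWord {P T E : Type} [Fintype T] (N : SyncPN P T E) (M : P → ℕ)
    (w : List E) : P → ℕ :=
  w.foldl (step N) M

/-- A net is deterministic if no place has two distinct output transitions
sharing the same label. -/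
def deterministic {P T E : Type} (N : SyncPN P T E) : Prop :=
  ∀ (p : P) (t t' : T), t ≠ t' → 1 ≤ N.Pre p t → 1 ≤ N.Pre p t' → N.f t ≠ N.f t'

/-- A state machine: each transition `t` has single input place `ins t`
and single output place `outs t`, with arc weight 1. -/
def isSM {P T E : Type} (N : SyncPN P T E) (ins outs : T → P) : Prop :=
  (∀ p t, N.Pre p t = if p = ins t then 1 else 0) ∧
  (∀ p t, N.Post p t = if p = outs t then 1 else 0)

/-- Strong connectedness of the associated graph of a state machine
(an arc from `ins t` to `outs t` for each transition `t`). -/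
def stronglyConnected {P T : Type} (ins outs : T → P) : Prop :=
  ∀ p p' : P, Relation.ReflTransGen (fun a b => ∃ t, ins t = a ∧ outs t = b) p p'

/-- In a deterministic net, the transitions fired by one event consume from each place at most
the tokens it holds. -/
theorem sum_pre_le_of_deterministic {P T E : Type} [Fintype T] {N : SyncPN P T E}
    (hdet : deterministic N) (M : P → ℕ) (e : E) (p : P) :
    (∑ t : T, if N.f t = e ∧ enabled N M t then N.Pre p t else 0) ≤ M p := by
  by_cases h : ∃ t₀, (N.f t₀ = e ∧ enabled N M t₀) ∧ 1 ≤ N.Pre p t₀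
  · obtain ⟨t₀, ht₀, hpre⟩ := h
    rw [Finset.sum_eq_single t₀, if_pos ht₀]
    · exact ht₀.2 p
    · intro t _ hne
      split_ifs with ht
      · by_contra h0
        exact hdet p t t₀ hne (Nat.one_le_iff_ne_zero.mpr h0) hpre (ht.1.trans ht₀.1.symm)
      · rfl
    · simp
  · push Not at h
    rw [Finset.sum_eq_zero]
    · exact Nat.zero_le _
    · intro t _
      split_ifs with ht
      · exact Nat.lt_one_iff.mp (h t ht)
      · rfl

/-- The state equation of a deterministic net, free of truncated subtraction. -/
theorem step_add_sum_pre {P T E : Type} [Fintype T] {N : SyncPN P T E}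
    (hdet : deterministic N) (M : P → ℕ) (e : E) (p : P) :
    step N M e p + (∑ t : T, if N.f t = e ∧ enabled N M t then N.Pre p t else 0) =
      M p + ∑ t : T, if N.f t = e ∧ enabled N M t then N.Post p t else 0 :=
  Nat.sub_add_cancel ((sum_pre_le_of_deterministic hdet M e p).trans (Nat.le_add_right _ _))

/-- If every transition consumes from `Ps` as many tokens as it produces there, then the token
count of `Ps` is invariant under every event. -/
theorem sum_step_eq_of_balanced {P T E : Type} [Fintype T] {N : SyncPN P T E}
    (hdet : deterministic N) {Ps : Finset P}
    (hbal : ∀ t, ∑ p ∈ Ps, N.Pre p t = ∑ p ∈ Ps, N.Post p t) (M : P → ℕ) (e : E) :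
    ∑ p ∈ Ps, step N M e p = ∑ p ∈ Ps, M p := by
  have hflow : (∑ p ∈ Ps, ∑ t : T, if N.f t = e ∧ enabled N M t then N.Pre p t else 0) =
      ∑ p ∈ Ps, ∑ t : T, if N.f t = e ∧ enabled N M t then N.Post p t else 0 := by
    rw [Finset.sum_comm, Finset.sum_comm (s := Ps)]
    refine Finset.sum_congr rfl fun t _ => ?_
    split_ifs
    · exact hbal t
    · rfl
  have hstate := Finset.sum_congr (rfl : Ps = Ps) fun p _ => step_add_sum_pre hdet M e p
  rw [Finset.sum_add_distrib, Finset.sum_add_distrib, hflow] at hstate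
  exact Nat.add_right_cancel hstate

/-- Invariance of the token count of a state machine subnet (proof of Proposition 7):
if `(Ps, Ts)` is a state machine subnet of a deterministic synchronized Petri net and
no transition outside `Ts` is connected to a place of `Ps`, then the token count in
`Ps` is invariant under the occurrence of any input event. -/
theorem subnet_token_count_invariant {P T E : Type} [Fintype P] [Fintype T]
    (N : SyncPN P T E) (hdet : deterministic N)
    (Ps : Finset P) (Ts : Finset T) (ins outs : T → P)
    (hin : ∀ t ∈ Ts, ins t ∈ Ps)
    (hout : ∀ t ∈ Ts, outs t ∈ Ps)
    (hPre : ∀ t ∈ Ts, ∀ p ∈ Ps, N.Pre p t = if p = ins t then 1 else 0)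
    (hPost : ∀ t ∈ Ts, ∀ p ∈ Ps, N.Post p t = if p = outs t then 1 else 0)
    (hTz : ∀ t ∉ Ts, ∀ p ∈ Ps, N.Pre p t = 0 ∧ N.Post p t = 0) :
    ∀ (M : P → ℕ) (e : E), ∑ p ∈ Ps, step N M e p = ∑ p ∈ Ps, M p := by
  refine sum_step_eq_of_balanced hdet fun t => ?_
  by_cases ht : t ∈ Ts
  · rw [Finset.sum_congr rfl (hPre t ht), Finset.sum_congr rfl (hPost t ht)]
    simp [hin t ht, hout t ht]
  · exact Finset.sum_congr rfl fun p hp => (hTz t ht p hp).1.trans (hTz t ht p hp).2.symm
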